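/- Let T be a proper subgraph of a finite simple graph G and let s_G : V(G) → ℕ. Suppose G' is an induced subgraph of G − V(T) and let S = G − V(G'). If G' is s'-reducible for the function s' defined by s'(v) = s_G(v) − d_S(v) for v ∈ V(G'), where d_S(v) is the number of neighbors of v in S, then there is no s_G-list assignment L for G such that G is T-critical with respect to L. -/

import Mathlib

/-- A graph `K` is `s`-reducible (for list sizes given by `s : W → ℤ`):
there is a proper subgraph `H ⊊ K` such that for every list assignment `L`
with `|L(v)| ≥ s(v)` for all `v`, if `H` is `L`-colorable then `K` is `L`-colorable. -/
def SReducibleZ {W : Type*} (K : SimpleGraph W) (s : W → ℤ) : Prop :=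
  ∃ H : K.Subgraph, H ≠ ⊤ ∧ ∀ L : W → Finset ℕ, (∀ v, s v ≤ ((L v).card : ℤ)) →
    (∃ φ : W → ℕ, (∀ v ∈ H.verts, φ v ∈ L v) ∧ ∀ ⦃u v⦄, H.Adj u v → φ u ≠ φ v) →
    (∃ φ : W → ℕ, (∀ v, φ v ∈ L v) ∧ ∀ ⦃u v⦄, K.Adj u v → φ u ≠ φ v)

/-- `G` is `T`-critical with respect to `L`: `T` is a proper subgraph of `G`, and for
every proper subgraph `G' ⊊ G` with `T ⊆ G'`, some `L`-coloring of `T` extends to an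
`L`-coloring of `G'` but does not extend to an `L`-coloring of `G`. -/
def TCritical {V : Type*} (G : SimpleGraph V) (T : G.Subgraph) (L : V → Finset ℕ) : Prop :=
  T ≠ ⊤ ∧ ∀ G' : G.Subgraph, T ≤ G' → G' ≠ ⊤ →
    ∃ ψ : V → ℕ, (∀ v ∈ T.verts, ψ v ∈ L v) ∧ (∀ ⦃u v⦄, T.Adj u v → ψ u ≠ ψ v) ∧
      (∃ φ : V → ℕ, (∀ v ∈ G'.verts, φ v ∈ L v) ∧ (∀ ⦃u v⦄, G'.Adj u v → φ u ≠ φ v) ∧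
        ∀ v ∈ T.verts, φ v = ψ v) ∧
      ¬ ∃ φ : V → ℕ, (∀ v, φ v ∈ L v) ∧ (∀ ⦃u v⦄, G.Adj u v → φ u ≠ φ v) ∧
        ∀ v ∈ T.verts, φ v = ψ v

/-!
Suppose the subgraph `H ⊊ G[A]` witnesses reducibility, and let `G' ⊊ G` be obtained from `G` by
replacing `G[A]` by `H`. Given an `L`-coloring `φ` of `G'`, delete from the list of each `v ∈ A`
the colors that `φ` uses on neighbors of `v` outside `A`. At least `s'(v)` colors remain, and `φ`
still colors `H` from them, so reducibility recolors all of `G[A]` from the remaining lists.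
Together with `φ` outside `A` this is an `L`-coloring of `G` that agrees with `φ` on `T`; hence
`G'` contradicts `T`-criticality.
-/

section

variable {V α : Type*} {G : SimpleGraph V} {A : Set V}

/-- `φ` is an `L`-coloring of the subgraph `H`; colors of vertices outside `H` are irrelevant.
Colorings of the whole graph are those of `⊤`. -/
def IsListColoring (H : G.Subgraph) (L : V → Finset α) (φ : V → α) : Prop :=
  (∀ v ∈ H.verts, φ v ∈ L v) ∧ ∀ ⦃u v⦄, H.Adj u v → φ u ≠ φ v

theorem IsListColoring.mono {H K : G.Subgraph} {L : V → Finset α} {φ : V → α}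
    (hφ : IsListColoring K L φ) (hHK : H ≤ K) : IsListColoring H L φ :=
  ⟨fun v hv ↦ hφ.1 v (hHK.1 hv), fun _ _ huv ↦ hφ.2 (hHK.2 huv)⟩

theorem le_deleteVerts {T K : G.Subgraph} (hTK : T ≤ K) (hTA : Disjoint T.verts A) :
    T ≤ K.deleteVerts A := by
  rw [Set.disjoint_left] at hTA
  exact ⟨fun v hv ↦ ⟨hTK.1 hv, hTA hv⟩, fun u v huv ↦
    SimpleGraph.Subgraph.deleteVerts_adj.mpr ⟨hTK.1 (T.edge_vert huv), hTA (T.edge_vert huv),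
      hTK.1 (T.edge_vert huv.symm), hTA (T.edge_vert huv.symm), hTK.2 huv⟩⟩

/-- The subgraph of `G` obtained by replacing `G[A]` by its subgraph `H`: delete from `G` the
vertices and the edges of `G[A]` that are missing from `H`. -/
def replaceInduced (H : (G.induce A).Subgraph) : G.Subgraph where
  verts := {v | ∀ hv : v ∈ A, (⟨v, hv⟩ : A) ∈ H.verts}
  Adj u v := G.Adj u v ∧
    (∀ hu : u ∈ A, (⟨u, hu⟩ : A) ∈ H.verts) ∧ (∀ hv : v ∈ A, (⟨v, hv⟩ : A) ∈ H.verts) ∧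
    ∀ (hu : u ∈ A) (hv : v ∈ A), H.Adj ⟨u, hu⟩ ⟨v, hv⟩
  adj_sub huv := huv.1
  edge_vert huv := huv.2.1
  symm := ⟨fun _ _ ⟨huv, hu, hv, hH⟩ ↦ ⟨huv.symm, hv, hu, fun hv hu ↦ (hH hu hv).symm⟩⟩

theorem deleteVerts_le_replaceInduced (H : (G.induce A).Subgraph) :
    (⊤ : G.Subgraph).deleteVerts A ≤ replaceInduced H := by
  refine ⟨fun v hv hvA ↦ absurd hvA hv.2, fun u v huv ↦ ?_⟩
  obtain ⟨-, hu, -, hv, huv⟩ := SimpleGraph.Subgraph.deleteVerts_adj.mp huv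
  exact ⟨huv, fun h ↦ absurd h hu, fun h ↦ absurd h hv, fun h ↦ absurd h hu⟩

theorem comap_replaceInduced (H : (G.induce A).Subgraph) :
    (replaceInduced H).comap (SimpleGraph.Embedding.induce A).toHom = H := by
  ext u v
  · exact ⟨fun hu ↦ hu u.2, fun hu _ ↦ hu⟩
  · exact ⟨fun huv ↦ huv.2.2.2.2 u.2 v.2, fun huv ↦ ⟨H.adj_sub huv, H.adj_sub huv,
      fun _ ↦ H.edge_vert huv, fun _ ↦ H.edge_vert huv.symm, fun _ _ ↦ huv⟩⟩

theorem replaceInduced_ne_top {H : (G.induce A).Subgraph} (hH : H ≠ ⊤) :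
    replaceInduced H ≠ ⊤ := by
  intro htop
  apply hH
  rw [← comap_replaceInduced H, htop, SimpleGraph.Subgraph.comap_equiv_top]

open Classical in
/-- The colors of `L v` that `φ` does not use on the neighbors of `v` outside `A`: the list left
for `v ∈ A` once `G - A` has been colored by `φ`. -/
noncomputable def residualList (G : SimpleGraph V) (A : Set V) (L : V → Finset α)
    (φ : V → α) (v : V) : Finset α :=
  {c ∈ L v | ∀ u, u ∉ A → G.Adj u v → φ u ≠ c}

theorem mem_residualList {L : V → Finset α} {φ : V → α} {v : V} {c : α} :
    c ∈ residualList G A L φ v ↔ c ∈ L v ∧ ∀ u, u ∉ A → G.Adj u v → φ u ≠ c := by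
  classical exact Finset.mem_filter

theorem card_le_card_residualList_add_ncard (L : V → Finset α) (φ : V → α) {v : V}
    (hfin : {u | u ∉ A ∧ G.Adj u v}.Finite) :
    (L v).card ≤ (residualList G A L φ v).card + {u | u ∉ A ∧ G.Adj u v}.ncard := by
  classical
  have hcover : L v ⊆ residualList G A L φ v ∪ hfin.toFinset.image φ := by
    intro c hc
    by_cases hused : ∃ u, (u ∉ A ∧ G.Adj u v) ∧ φ u = c
    · exact Finset.mem_union_right _ (by simpa using hused)
    · exact Finset.mem_union_left _ <|
        mem_residualList.mpr ⟨hc, fun u hu huv huc ↦ hused ⟨u, ⟨hu, huv⟩, huc⟩⟩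
  calc (L v).card
      ≤ (residualList G A L φ v ∪ hfin.toFinset.image φ).card := Finset.card_le_card hcover
    _ ≤ (residualList G A L φ v).card + (hfin.toFinset.image φ).card := Finset.card_union_le _ _
    _ ≤ (residualList G A L φ v).card + hfin.toFinset.card := by
      gcongr
      exact Finset.card_image_le
    _ = (residualList G A L φ v).card + {u | u ∉ A ∧ G.Adj u v}.ncard := by
      rw [Set.ncard_eq_toFinset_card _ hfin]

theorem IsListColoring.restrict_residualList {H : (G.induce A).Subgraph}
    {L : V → Finset α} {φ : V → α} (hφ : IsListColoring (replaceInduced H) L φ) :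
    IsListColoring H (fun v ↦ residualList G A L φ v) (fun v ↦ φ v) := by
  constructor
  · intro v hv
    refine mem_residualList.mpr ⟨hφ.1 v fun _ ↦ hv, fun u hu huv ↦ hφ.2 ?_⟩
    exact ⟨huv, fun h ↦ absurd h hu, fun _ ↦ hv, fun h ↦ absurd h hu⟩
  · intro u v huv
    rw [← comap_replaceInduced H] at huv
    exact hφ.2 huv.2

theorem IsListColoring.extend {L : V → Finset α} {φ : V → α} {χ : A → α}
    (hφ : IsListColoring ((⊤ : G.Subgraph).deleteVerts A) L φ)
    (hχ : IsListColoring (⊤ : (G.induce A).Subgraph) (fun v ↦ residualList G A L φ v) χ) :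
    IsListColoring (⊤ : G.Subgraph) L (Function.extend Subtype.val χ φ) := by
  have hin (v : A) : Function.extend Subtype.val χ φ v = χ v :=
    Subtype.val_injective.extend_apply χ φ v
  have hout {v : V} (hv : v ∉ A) : Function.extend Subtype.val χ φ v = φ v :=
    Function.extend_apply' χ φ v fun ⟨a, ha⟩ ↦ hv (ha ▸ a.2)
  have hχL (v : A) := mem_residualList.mp (hχ.1 v trivial)
  constructor
  · intro v _
    by_cases hv : v ∈ A
    · exact hin ⟨v, hv⟩ ▸ (hχL ⟨v, hv⟩).1
    · exact hout hv ▸ hφ.1 v ⟨trivial, hv⟩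
  · intro u v huv
    by_cases hu : u ∈ A <;> by_cases hv : v ∈ A
    · rw [hin ⟨u, hu⟩, hin ⟨v, hv⟩]
      exact hχ.2 huv
    · rw [hin ⟨u, hu⟩, hout hv]
      exact ((hχL ⟨u, hu⟩).2 v hv huv.symm).symm
    · rw [hout hu, hin ⟨v, hv⟩]
      exact (hχL ⟨v, hv⟩).2 u hu huv
    · rw [hout hu, hout hv]
      exact hφ.2 (SimpleGraph.Subgraph.deleteVerts_adj.mpr ⟨trivial, hu, trivial, hv, huv⟩)

theorem SReducibleZ.exists_subgraph_forall_extends {s : V → ℕ}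
    (hfin : ∀ v ∈ A, {u | u ∉ A ∧ G.Adj u v}.Finite)
    (hred : SReducibleZ (G.induce A)
      (fun v ↦ (s v.val : ℤ) - ({u | u ∉ A ∧ G.Adj u v.val}.ncard : ℤ))) :
    ∃ G' : G.Subgraph, G' ≠ ⊤ ∧ (⊤ : G.Subgraph).deleteVerts A ≤ G' ∧
      ∀ (L : V → Finset ℕ) (φ : V → ℕ), (∀ v ∈ A, s v ≤ (L v).card) → IsListColoring G' L φ →
        ∃ φ' : V → ℕ, IsListColoring (⊤ : G.Subgraph) L φ' ∧ ∀ v ∉ A, φ' v = φ v := by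
  obtain ⟨H, hH, hext⟩ := hred
  refine ⟨replaceInduced H, replaceInduced_ne_top hH, deleteVerts_le_replaceInduced H, ?_⟩
  intro L φ hL hφ
  have hcard (v : A) : (s v : ℤ) - ({u | u ∉ A ∧ G.Adj u v}.ncard : ℤ) ≤
      ((residualList G A L φ v).card : ℤ) := by
    have hresidual := card_le_card_residualList_add_ncard L φ (hfin v v.2)
    have hsize := hL v v.2
    omega
  obtain ⟨χ, hχL, hχ⟩ := hext _ hcard ⟨_, hφ.restrict_residualList⟩
  refine ⟨Function.extend Subtype.val χ φ,
    (hφ.mono (deleteVerts_le_replaceInduced H)).extend ⟨fun v _ ↦ hχL v, hχ⟩, fun v hv ↦ ?_⟩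
  exact Function.extend_apply' χ φ v fun ⟨a, ha⟩ ↦ hv (ha ▸ a.2)

end

theorem no_critical_of_reducible_subgraph_general {V : Type*} (G : SimpleGraph V)
    (T : G.Subgraph) (sG : V → ℕ) (A : Set V) (hA : A ⊆ T.vertsᶜ)
    (hfin : ∀ v ∈ A, {u | u ∉ A ∧ G.Adj u v}.Finite)
    (hred : SReducibleZ (G.induce A)
      (fun v ↦ (sG v.val : ℤ) - ({u | u ∉ A ∧ G.Adj u v.val}.ncard : ℤ))) :
    ¬ ∃ L : V → Finset ℕ, (∀ v ∈ A, sG v ≤ (L v).card) ∧ TCritical G T L := by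
  rintro ⟨L, hL, -, hcrit⟩
  obtain ⟨G', hne, hle, hext⟩ := hred.exists_subgraph_forall_extends hfin
  have hTG' : T ≤ G' :=
    (le_deleteVerts le_top (Set.subset_compl_iff_disjoint_left.mp hA)).trans hle
  obtain ⟨ψ, -, -, ⟨φ, hφL, hφ, hφψ⟩, hψ⟩ := hcrit G' hTG' hne
  obtain ⟨φ', hφ', heq⟩ := hext L φ hL ⟨hφL, hφ⟩
  exact hψ ⟨φ', fun v ↦ hφ'.1 v trivial, hφ'.2,
    fun v hv ↦ (heq v fun hvA ↦ hA hvA hv).trans (hφψ v hv)⟩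

/-- Let `T` be a proper subgraph of `G` and `s_G : V(G) → ℕ`.  If an induced subgraph
`G'` of `G − V(T)` (induced by a vertex set `A` disjoint from `V(T)`) is `s'`-reducible,
where `s'(v) = s_G(v) − d_S(v)` and `d_S(v)` counts the neighbors of `v` in
`S = G − V(G')`, then there is no `s_G`-list assignment `L` for which `G` is
`T`-critical with respect to `L`. -/
theorem no_critical_of_reducible_subgraph {V : Type*} [Fintype V] (G : SimpleGraph V)
    (T : G.Subgraph) (hT : T ≠ ⊤) (sG : V → ℕ) (A : Set V) (hA : A ⊆ (T.verts)ᶜ)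
    (hred : SReducibleZ (G.induce A)
      (fun v => (sG v.val : ℤ) - ({u | u ∉ A ∧ G.Adj u v.val}.ncard : ℤ))) :
    ¬ ∃ L : V → Finset ℕ, (∀ v, sG v ≤ (L v).card) ∧ TCritical G T L := by
  rintro ⟨L, hL, hcrit⟩
  exact no_critical_of_reducible_subgraph_general G T sG A hA (fun _ _ ↦ Set.toFinite _) hred
    ⟨L, fun v _ ↦ hL v, hcrit⟩
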